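/- (Instantaneous Nash-regret is controlled by the maximum one-stage smoothed improvement.) Consider a finite Markov game with smoothing parameter τ > 0 and write Ā = max_{i∈I}|A_i|. Fix a profile π and a probability distribution μ on S, and for each player i and state s define Δ_i(s) = max_{p∈Δ(A_i)} ( ∑_{a_i} p(a_i)·Q̃_i(s,a_i;π) − τ·ν(p) ) − ( ∑_{a_i} π_i(s,a_i)·Q̃_i(s,a_i;π) − τ·ν_i(s,π_i) ), the maximum being over the probability simplex Δ(A_i). Then for every player i: max_{π_i'} V_i(μ,(π_i',π_{-i})) − V_i(μ,π) ≤ (1/(1−δ))·( max_{j∈I, s∈S} Δ_j(s) + 2·τ·log(Ā) ), the left-hand maximum being over all policies π_i' of player i. -/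

import Mathlib

open Finset

section MarkovGameDefs

variable {S : Type*} {I : Type*} {A : I → Type*}

/-- A probability vector on a finite set. -/
def IsProbVec {α : Type*} [Fintype α] (p : α → ℝ) : Prop :=
  (∀ a, 0 ≤ p a) ∧ ∑ a, p a = 1

/-- A stationary policy profile: each player's policy gives a probability vector at each state. -/
def IsPolicy [Fintype I] [∀ i, Fintype (A i)] (π : ∀ i, S → A i → ℝ) : Prop :=
  ∀ i s, IsProbVec (π i s)

/-- A transition kernel. -/
def IsKernel [Fintype S] (P : S → (∀ i, A i) → S → ℝ) : Prop :=
  ∀ s a, IsProbVec (fun s' => P s a s')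

/-- Product distribution on joint actions induced by a profile. -/
noncomputable def jointDist [Fintype I] (π : ∀ i, S → A i → ℝ) (s : S) (a : ∀ i, A i) : ℝ :=
  ∏ i, π i s (a i)

/-- Induced transition matrix `P^π`. -/
noncomputable def transMat [Fintype S] [Fintype I] [DecidableEq I] [∀ i, Fintype (A i)]
    (P : S → (∀ i, A i) → S → ℝ) (π : ∀ i, S → A i → ℝ) (s s' : S) : ℝ :=
  ∑ a : ∀ j, A j, jointDist π s a * P s a s'

/-- Expected one-stage payoff `u(s,π)`. -/
noncomputable def expPay [Fintype I] [DecidableEq I] [∀ i, Fintype (A i)]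
    (u : S → (∀ i, A i) → ℝ) (π : ∀ i, S → A i → ℝ) (s : S) : ℝ :=
  ∑ a : ∀ j, A j, jointDist π s a * u s a

/-- `V` solves the Bellman equation for payoff `u`, kernel `P`, discount `δ`, profile `π`. -/
def IsValueFun [Fintype S] [Fintype I] [DecidableEq I] [∀ i, Fintype (A i)]
    (δ : ℝ) (P : S → (∀ i, A i) → S → ℝ) (u : S → (∀ i, A i) → ℝ)
    (π : ∀ i, S → A i → ℝ) (V : S → ℝ) : Prop :=
  ∀ s, V s = expPay u π s + δ * ∑ s', transMat P π s s' * V s'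

/-- Player `i`'s Q-function, given a value function `V` for player `i` under `π`. -/
noncomputable def Qfun [Fintype S] [Fintype I] [DecidableEq I] [∀ i, Fintype (A i)]
    [∀ i, DecidableEq (A i)]
    (δ : ℝ) (P : S → (∀ i, A i) → S → ℝ) (u : S → (∀ i, A i) → ℝ)
    (π : ∀ i, S → A i → ℝ) (V : S → ℝ) (i : I) (s : S) (ai : A i) : ℝ :=
  ∑ a : ∀ j, A j,
    if a i = ai then
      (∏ j ∈ Finset.univ.erase i, π j s (a j)) * (u s a + δ * ∑ s', P s a s' * V s')
    else 0

/-- Discounted state visitation distribution `d_μ^π`. -/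
noncomputable def dvisit [Fintype S] [DecidableEq S] [Fintype I] [DecidableEq I]
    [∀ i, Fintype (A i)]
    (δ : ℝ) (P : S → (∀ i, A i) → S → ℝ) (π : ∀ i, S → A i → ℝ) (μ : S → ℝ) (s : S) : ℝ :=
  (1 - δ) * ∑' k : ℕ, δ ^ k * ∑ s0, μ s0 * ((Matrix.of (transMat P π)) ^ k) s0 s

/-- Negative entropy `ν(p) = ∑ p log p` (with the convention `0 log 0 = 0`,
which holds automatically since `Real.log 0 = 0`). -/
noncomputable def negent {α : Type*} [Fintype α] (p : α → ℝ) : ℝ :=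
  ∑ a, p a * Real.log (p a)

/-- `Ṽ` solves the Bellman equation of the `τ`-smoothed game for player `i`. -/
def IsSmoothedValueFun [Fintype S] [Fintype I] [DecidableEq I] [∀ i, Fintype (A i)]
    (δ τ : ℝ) (P : S → (∀ i, A i) → S → ℝ) (u : S → (∀ i, A i) → ℝ)
    (π : ∀ i, S → A i → ℝ) (i : I) (Vt : S → ℝ) : Prop :=
  ∀ s, Vt s = expPay u π s - τ * negent (π i s) + δ * ∑ s', transMat P π s s' * Vt s'

/-- Smoothed Q-function `Q̃_i(s,a_i;π)`. -/
noncomputable def Qsmooth [Fintype S] [Fintype I] [DecidableEq I] [∀ i, Fintype (A i)]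
    [∀ i, DecidableEq (A i)]
    (δ τ : ℝ) (P : S → (∀ i, A i) → S → ℝ) (u : S → (∀ i, A i) → ℝ)
    (π : ∀ i, S → A i → ℝ) (Vt : S → ℝ) (i : I) (s : S) (ai : A i) : ℝ :=
  ∑ a : ∀ j, A j,
    if a i = ai then
      (∏ j ∈ Finset.univ.erase i, π j s (a j)) *
        (u s a - τ * negent (π i s) + δ * ∑ s', P s a s' * Vt s')
    else 0

/-- Euclidean (ℓ²) norm on `α → ℝ`. -/
noncomputable def l2norm {α : Type*} [Fintype α] (f : α → ℝ) : ℝ :=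
  Real.sqrt (∑ a, f a ^ 2)

/-- Standard inner product on `α → ℝ`. -/
noncomputable def dotp {α : Type*} [Fintype α] (f g : α → ℝ) : ℝ :=
  ∑ a, f a * g a

/-- `y` is the Euclidean orthogonal projection of `x` onto the probability simplex. -/
noncomputable def IsProjSimplex {α : Type*} [Fintype α] (x y : α → ℝ) : Prop :=
  IsProbVec y ∧ ∀ z, IsProbVec z → l2norm (fun a => y a - x a) ≤ l2norm (fun a => z a - x a)

/-- Softmax (smoothed best response) with temperature `τ`. -/
noncomputable def softmax {α : Type*} [Fintype α] (τ : ℝ) (q : α → ℝ) (a : α) : ℝ :=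
  Real.exp (q a / τ) / ∑ a', Real.exp (q a' / τ)

end MarkovGameDefs

/-- Maximum one-stage improvement of the smoothed `Q`-value, `Δ_i(s)`:
the gap between the best entropy-regularized one-stage value and the current one. -/
noncomputable def improveDelta {S I : Type*} {A : I → Type*}
    [Fintype S] [Fintype I] [DecidableEq I] [∀ i, Fintype (A i)] [∀ i, DecidableEq (A i)]
    (δ τ : ℝ) (P : S → (∀ i, A i) → S → ℝ) (u : S → (∀ i, A i) → ℝ)
    (π : ∀ j, S → A j → ℝ) (Vt : S → ℝ) (i : I) (s : S) : ℝ :=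
  (⨆ p : {p : A i → ℝ // IsProbVec p},
      ((∑ ai, p.1 ai * Qsmooth δ τ P u π Vt i s ai) - τ * negent p.1)) -
    ((∑ ai, π i s ai * Qsmooth δ τ P u π Vt i s ai) - τ * negent (π i s))

/-!
The value `V'` of the deviation is first compared with the smoothed value `Ṽ` of `π`, and then `Ṽ`
with `V`. If a Bellman operator raises a function `W` by at most `c` at every state, its fixed point
exceeds `W` by at most `c / (1 - δ)`, because the operator is a `δ`-contraction. The unsmoothed
Bellman operator of the deviation raises `Ṽ` by at most `max Δ_i`, since dropping the nonnegative
entropy bonus of the deviation only lowers its one-stage value. The smoothed Bellman operator of `π`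
raises `V` by exactly the entropy bonus, which is at most `τ log |A_i|`.
-/

namespace IsProbVec

variable {α : Type*} [Fintype α] {p : α → ℝ}

theorem le_one (hp : IsProbVec p) (a : α) : p a ≤ 1 :=
  (mem_Icc_of_mem_stdSimplex hp a).2

theorem nonempty (hp : IsProbVec p) : Nonempty α := by
  by_contra h
  rw [not_nonempty_iff] at h
  simpa using hp.2

theorem sum_mul_le (hp : IsProbVec p) {f : α → ℝ} {c : ℝ} (hf : ∀ a, f a ≤ c) :
    ∑ a, p a * f a ≤ c :=
  calc ∑ a, p a * f a ≤ ∑ a, p a * c :=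
        sum_le_sum fun a _ => mul_le_mul_of_nonneg_left (hf a) (hp.1 a)
    _ = c := by rw [← sum_mul, hp.2, one_mul]

theorem negent_nonpos (hp : IsProbVec p) : negent p ≤ 0 :=
  sum_nonpos fun a _ =>
    mul_nonpos_of_nonneg_of_nonpos (hp.1 a) (Real.log_nonpos (hp.1 a) (hp.le_one a))

theorem neg_negent_le_log_card (hp : IsProbVec p) :
    -negent p ≤ Real.log (Fintype.card α) := by
  have := hp.nonempty
  set n : ℝ := (Fintype.card α : ℝ)
  have hn : 0 < n := Nat.cast_pos.2 Fintype.card_pos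
  have jensen : ∑ a, n⁻¹ * (p a).negMulLog ≤ (∑ a, n⁻¹ * p a).negMulLog :=
    Real.concaveOn_negMulLog.le_map_sum (fun _ _ => inv_nonneg.2 hn.le)
      (by simp [n]) (fun a _ => hp.1 a)
  rw [← mul_sum, ← mul_sum, hp.2, mul_one] at jensen
  have sum_eq : ∑ a, (p a).negMulLog = -negent p := by
    simp only [Real.negMulLog, negent, neg_mul, sum_neg_distrib]
  have uniform_eq : n⁻¹.negMulLog = n⁻¹ * Real.log n := by
    rw [Real.negMulLog, Real.log_inv, neg_mul_neg]
  rw [sum_eq, uniform_eq] at jensen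
  exact le_of_mul_le_mul_left jensen (inv_pos.2 hn)

end IsProbVec

theorem bddAbove_range_sum_mul_sub_negent {α : Type*} [Fintype α] (τ : ℝ) (q : α → ℝ) :
    BddAbove (Set.range fun p : {p : α → ℝ // IsProbVec p} =>
      (∑ a, p.1 a * q a) - τ * negent p.1) := by
  have hcont : Continuous fun p : α → ℝ => (∑ a, p a * q a) - τ * negent p := by
    have := Real.continuous_mul_log
    unfold negent
    fun_prop
  have hbdd := (isCompact_stdSimplex ℝ α).bddAbove_image hcont.continuousOn
  rwa [Set.image_eq_range] at hbdd

section Discounting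

variable {S : Type*} [Fintype S] {T : S → S → ℝ} {δ c : ℝ}

theorem le_of_le_add_discounted (hT : ∀ s, IsProbVec (T s)) (hδ : 0 ≤ δ) (hδ1 : δ < 1)
    {W : S → ℝ} (hW : ∀ s, W s ≤ c + δ * ∑ s', T s s' * W s') (s : S) :
    W s ≤ 1 / (1 - δ) * c := by
  have : Nonempty S := ⟨s⟩
  obtain ⟨m, hm⟩ := Finite.exists_max W
  have hmax : W m ≤ c + δ * W m :=
    (hW m).trans (by gcongr; exact (hT m).sum_mul_le hm)
  refine (hm s).trans ?_
  rw [one_div, inv_mul_eq_div, le_div_iff₀ (sub_pos.2 hδ1)]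
  linarith

theorem sub_le_of_bellman_le_add (hT : ∀ s, IsProbVec (T s)) (hδ : 0 ≤ δ) (hδ1 : δ < 1)
    {r V W : S → ℝ} (hV : ∀ s, V s = r s + δ * ∑ s', T s s' * V s')
    (hW : ∀ s, r s + δ * ∑ s', T s s' * W s' ≤ W s + c) (s : S) :
    V s - W s ≤ 1 / (1 - δ) * c := by
  refine le_of_le_add_discounted hT hδ hδ1 (W := fun s => V s - W s) (fun s => ?_) s
  simp only [mul_sub, sum_sub_distrib]
  linarith [hV s, hW s]

end Discounting

section Policies

variable {S I : Type*} [Fintype I] {A : I → Type*} [∀ i, Fintype (A i)]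
  {π : ∀ j, S → A j → ℝ}

theorem IsPolicy.update [DecidableEq I] (hπ : IsPolicy π) {i : I} {ρ : S → A i → ℝ}
    (hρ : ∀ s, IsProbVec (ρ s)) : IsPolicy (Function.update π i ρ) :=
  (Function.forall_update_iff π fun _ σ => ∀ s, IsProbVec (σ s)).2 ⟨hρ, fun j _ => hπ j⟩

theorem IsPolicy.isProbVec_jointDist [DecidableEq I] (hπ : IsPolicy π) (s : S) :
    IsProbVec (jointDist π s) := by
  refine ⟨fun a => prod_nonneg fun i _ => (hπ i s).1 (a i), ?_⟩
  unfold jointDist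
  rw [← Fintype.prod_sum fun i => π i s]
  exact prod_eq_one fun i _ => (hπ i s).2

theorem IsPolicy.expPay_sub [DecidableEq I] (hπ : IsPolicy π) (u : S → (∀ i, A i) → ℝ)
    (c : S → ℝ) (s : S) : expPay (fun s a => u s a - c s) π s = expPay u π s - c s := by
  simp only [expPay, mul_sub, sum_sub_distrib, ← sum_mul, (hπ.isProbVec_jointDist s).2, one_mul]

theorem IsKernel.isProbVec_transMat [Fintype S] [DecidableEq I] {P : S → (∀ i, A i) → S → ℝ}
    (hP : IsKernel P) (hπ : IsPolicy π) (s : S) : IsProbVec (transMat P π s) := by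
  have hjoint := hπ.isProbVec_jointDist s
  refine ⟨fun s' => sum_nonneg fun a _ => mul_nonneg (hjoint.1 a) ((hP s a).1 s'), ?_⟩
  unfold transMat
  rw [sum_comm]
  simp only [← mul_sum, (hP s _).2, mul_one, hjoint.2]

end Policies

theorem jointDist_update {S I : Type*} [Fintype I] [DecidableEq I] {A : I → Type*}
    (π : ∀ j, S → A j → ℝ) (i : I) (ρ : S → A i → ℝ) (s : S) (a : ∀ j, A j) :
    jointDist (Function.update π i ρ) s a = ρ s (a i) * ∏ j ∈ univ.erase i, π j s (a j) := by
  rw [jointDist, ← mul_prod_erase _ _ (mem_univ i), Function.update_self]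
  congr 1
  exact prod_congr rfl fun j hj => by rw [Function.update_of_ne (ne_of_mem_erase hj)]

section OneStageDeviation

variable {S I : Type*} [Fintype S] [Fintype I] [DecidableEq I]
  {A : I → Type*} [∀ i, Fintype (A i)]

theorem sum_transMat_mul (P : S → (∀ i, A i) → S → ℝ) (π : ∀ j, S → A j → ℝ) (V : S → ℝ)
    (s : S) :
    ∑ s', transMat P π s s' * V s' = ∑ a, jointDist π s a * ∑ s', P s a s' * V s' := by
  simp only [transMat, sum_mul, mul_sum, mul_assoc]
  exact sum_comm

variable [∀ i, DecidableEq (A i)]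

theorem sum_mul_Qfun (δ : ℝ) (P : S → (∀ i, A i) → S → ℝ) (u : S → (∀ i, A i) → ℝ)
    (π : ∀ j, S → A j → ℝ) (V : S → ℝ) (i : I) (ρ : S → A i → ℝ) (s : S) :
    ∑ ai, ρ s ai * Qfun δ P u π V i s ai =
      expPay u (Function.update π i ρ) s +
        δ * ∑ s', transMat P (Function.update π i ρ) s s' * V s' := by
  set g : (∀ j, A j) → ℝ := fun a => u s a + δ * ∑ s', P s a s' * V s'
  calc ∑ ai, ρ s ai * Qfun δ P u π V i s ai
      = ∑ a : ∀ j, A j, ρ s (a i) * ((∏ j ∈ univ.erase i, π j s (a j)) * g a) := by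
        simp only [Qfun, mul_sum (s := (univ : Finset (∀ j, A j)))]
        rw [sum_comm]
        simp only [mul_ite, mul_zero, sum_ite_eq, mem_univ, if_true, g]
    _ = ∑ a, jointDist (Function.update π i ρ) s a * g a := by
        simp only [jointDist_update, mul_assoc]
    _ = _ := by
        simp only [g, expPay, sum_transMat_mul, mul_add, sum_add_distrib, mul_left_comm _ δ,
          ← mul_sum]

variable {δ τ : ℝ} {P : S → (∀ i, A i) → S → ℝ} {u : S → (∀ i, A i) → ℝ}
  {π : ∀ j, S → A j → ℝ} {Vt : S → ℝ} {i : I}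

theorem IsPolicy.sum_mul_Qsmooth (hπ : IsPolicy π) {ρ : S → A i → ℝ}
    (hρ : ∀ s, IsProbVec (ρ s)) (s : S) :
    ∑ ai, ρ s ai * Qsmooth δ τ P u π Vt i s ai =
      expPay u (Function.update π i ρ) s - τ * negent (π i s) +
        δ * ∑ s', transMat P (Function.update π i ρ) s s' * Vt s' := by
  rw [← (hπ.update hρ).expPay_sub u fun s => τ * negent (π i s)]
  exact sum_mul_Qfun δ P (fun s a => u s a - τ * negent (π i s)) π Vt i ρ s

theorem IsSmoothedValueFun.sum_mul_Qsmooth_self (hVt : IsSmoothedValueFun δ τ P u π i Vt)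
    (hπ : IsPolicy π) (s : S) : ∑ ai, π i s ai * Qsmooth δ τ P u π Vt i s ai = Vt s := by
  rw [hπ.sum_mul_Qsmooth (hπ i), Function.update_eq_self, ← hVt s]

variable (δ τ P u π Vt) in
theorem sub_le_improveDelta (s : S) {p : A i → ℝ} (hp : IsProbVec p) :
    ((∑ ai, p ai * Qsmooth δ τ P u π Vt i s ai) - τ * negent p) -
        ((∑ ai, π i s ai * Qsmooth δ τ P u π Vt i s ai) - τ * negent (π i s)) ≤
      improveDelta δ τ P u π Vt i s :=
  sub_le_sub_right (le_ciSup (bddAbove_range_sum_mul_sub_negent τ _) ⟨p, hp⟩) _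

theorem IsSmoothedValueFun.bellman_update_le_add_improveDelta
    (hVt : IsSmoothedValueFun δ τ P u π i Vt) (hτ : 0 ≤ τ) (hπ : IsPolicy π)
    {ρ : S → A i → ℝ} (hρ : ∀ s, IsProbVec (ρ s)) (s : S) :
    expPay u (Function.update π i ρ) s +
        δ * ∑ s', transMat P (Function.update π i ρ) s s' * Vt s' ≤
      Vt s + improveDelta δ τ P u π Vt i s := by
  have himprove := sub_le_improveDelta δ τ P u π Vt s (hρ s)
  rw [hπ.sum_mul_Qsmooth hρ, hVt.sum_mul_Qsmooth_self hπ] at himprove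
  have hentropy : τ * negent (ρ s) ≤ 0 :=
    mul_nonpos_of_nonneg_of_nonpos hτ (hρ s).negent_nonpos
  linarith

end OneStageDeviation

section Regret

variable {S I : Type*} [Fintype S] [Fintype I] [DecidableEq I]
  {A : I → Type*} [∀ i, Fintype (A i)]
  {δ τ : ℝ} {P : S → (∀ i, A i) → S → ℝ} {u : S → (∀ i, A i) → ℝ}
  {π : ∀ j, S → A j → ℝ} {i : I} {V Vt : S → ℝ}

theorem IsSmoothedValueFun.sub_le_log_card (hVt : IsSmoothedValueFun δ τ P u π i Vt)
    (hV : IsValueFun δ P u π V) (hδ : 0 ≤ δ) (hδ1 : δ < 1) (hτ : 0 ≤ τ) (hP : IsKernel P)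
    (hπ : IsPolicy π) (s : S) :
    Vt s - V s ≤ 1 / (1 - δ) * (τ * Real.log (Fintype.card (A i))) := by
  refine sub_le_of_bellman_le_add (hP.isProbVec_transMat hπ) hδ hδ1 hVt (fun s => ?_) s
  have hentropy := mul_le_mul_of_nonneg_left (hπ i s).neg_negent_le_log_card hτ
  linarith [hV s]

variable [∀ i, DecidableEq (A i)] {ρ : S → A i → ℝ} {V' : S → ℝ} {D : ℝ}

theorem IsSmoothedValueFun.deviation_sub_le (hVt : IsSmoothedValueFun δ τ P u π i Vt)
    (hV' : IsValueFun δ P u (Function.update π i ρ) V') (hδ : 0 ≤ δ) (hδ1 : δ < 1)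
    (hτ : 0 ≤ τ) (hP : IsKernel P) (hπ : IsPolicy π) (hρ : ∀ s, IsProbVec (ρ s))
    (hD : ∀ s, improveDelta δ τ P u π Vt i s ≤ D) (s : S) :
    V' s - Vt s ≤ 1 / (1 - δ) * D :=
  sub_le_of_bellman_le_add (hP.isProbVec_transMat (hπ.update hρ)) hδ hδ1 hV'
    (fun s => (hVt.bellman_update_le_add_improveDelta hτ hπ hρ s).trans
      (add_le_add_right (hD s) _)) s

theorem instantaneous_regret_le_max_improvement_general (hδ : 0 ≤ δ) (hδ1 : δ < 1)
    (hP : IsKernel P) (hτ : 0 ≤ τ) (hπ : IsPolicy π) (hρ : ∀ s, IsProbVec (ρ s))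
    (hV : IsValueFun δ P u π V) (hV' : IsValueFun δ P u (Function.update π i ρ) V')
    (hVt : IsSmoothedValueFun δ τ P u π i Vt) (hD : ∀ s, improveDelta δ τ P u π Vt i s ≤ D)
    {μ : S → ℝ} (hμ : IsProbVec μ) :
    (∑ s, μ s * V' s) - ∑ s, μ s * V s ≤
      1 / (1 - δ) * (D + τ * Real.log (Fintype.card (A i))) := by
  have hpointwise (s : S) :
      V' s - V s ≤ 1 / (1 - δ) * (D + τ * Real.log (Fintype.card (A i))) := by
    linarith [hVt.deviation_sub_le hV' hδ hδ1 hτ hP hπ hρ hD s,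
      hVt.sub_le_log_card hV hδ hδ1 hτ hP hπ s]
  simpa only [mul_sub, sum_sub_distrib] using hμ.sum_mul_le hpointwise

end Regret

/-- **Instantaneous Nash-regret is controlled by the maximum one-stage smoothed improvement.** -/
theorem instantaneous_regret_le_max_improvement
    {S I : Type*} [Fintype S] [Nonempty S] [DecidableEq S]
    [Fintype I] [Nonempty I] [DecidableEq I]
    {A : I → Type*} [∀ i, Fintype (A i)] [∀ i, Nonempty (A i)] [∀ i, DecidableEq (A i)]
    (δ : ℝ) (hδ : 0 < δ) (hδ1 : δ < 1)
    (P : S → (∀ i, A i) → S → ℝ) (hP : IsKernel P)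
    (u : I → S → (∀ i, A i) → ℝ)
    (τ : ℝ) (hτ : 0 < τ)
    (Abar : ℕ) (hAbar : Abar = Finset.univ.sup' Finset.univ_nonempty
      (fun i : I => Fintype.card (A i)))
    (V Vt : I → (∀ j, S → A j → ℝ) → S → ℝ)
    (hV : ∀ i π, IsPolicy π → IsValueFun δ P (u i) π (V i π))
    (hVt : ∀ i π, IsPolicy π → IsSmoothedValueFun δ τ P (u i) π i (Vt i π))
    (π : ∀ j, S → A j → ℝ) (hπ : IsPolicy π)
    (μ : S → ℝ) (hμ : IsProbVec μ) :
    ∀ (i : I) (πi' : S → A i → ℝ), (∀ s, IsProbVec (πi' s)) →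
      (∑ s, μ s * V i (Function.update π i πi') s) - (∑ s, μ s * V i π s) ≤
        (1 / (1 - δ)) *
          ((Finset.univ.sup' Finset.univ_nonempty
              (fun js : I × S => improveDelta δ τ P (u js.1) π (Vt js.1 π) js.1 js.2)) +
            2 * τ * Real.log Abar) := by
  intro i ρ hρ
  have hD (s : S) := le_sup' (fun js : I × S => improveDelta δ τ P (u js.1) π (Vt js.1 π) js.1 js.2)
    (mem_univ (i, s))
  have hcard : Fintype.card (A i) ≤ Abar :=
    hAbar ▸ le_sup' (fun j => Fintype.card (A j)) (mem_univ i)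
  have hlog : τ * Real.log (Fintype.card (A i)) ≤ 2 * τ * Real.log Abar := by
    gcongr
    linarith
  exact (instantaneous_regret_le_max_improvement_general hδ.le hδ1 hP hτ.le hπ hρ (hV i π hπ)
    (hV i _ (hπ.update hρ)) (hVt i π hπ) hD hμ).trans
    (mul_le_mul_of_nonneg_left (add_le_add_right hlog _) (one_div_nonneg.2 (sub_pos.2 hδ1).le))
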